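/- For every binary tree T = (V,E) rooted at a vertex r (i.e., every vertex of T_r has at most two children), f(T_r) ≥ |V| / h(T_r) − 1. -/

import Mathlib

/-- Finite rooted trees: a node together with the list of subtrees of its children. -/
inductive RTree : Type where
  | node : List RTree → RTree

namespace RTree

/-- `h t` is the number of vertices on a longest path starting at the root
(so a single vertex has `h = 1`). -/
def h : RTree → ℕ
  | node cs => 1 + (cs.attach.map fun c => h c.1).foldr max 0
decreasing_by simp only [node.sizeOf_spec]; have := List.sizeOf_lt_of_mem c.2; omega

/-- The number of vertices of a rooted tree. -/
def size : RTree → ℕ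
  | node cs => 1 + (cs.attach.map fun c => size c.1).sum
decreasing_by simp only [node.sizeOf_spec]; have := List.sizeOf_lt_of_mem c.2; omega

/-- The pairing function `f`: `f t = 0` if `t` has at most one vertex; otherwise, with
the heights of the subtrees rooted at the children listed in non-increasing order
`g₁ ≥ g₂ ≥ …` (padding with the height-`0` empty tree to make the number of entries
even, which does not change the sum below), `f t` is the maximum of `Σᵢ f(Tᵢ)` over all
children subtrees `Tᵢ`, and of `g₂ + g₄ + g₆ + …`. -/
def f : RTree → ℕ
  | node cs =>
    if cs.isEmpty then 0
    else
      let hs : List ℕ :=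
        (((cs.attach.map fun c => h c.1 : List ℕ) : Multiset ℕ).sort (· ≤ ·)).reverse
      max ((cs.attach.map fun c => f c.1).sum)
        (∑ i ∈ Finset.range hs.length, if i % 2 = 1 then hs.getD i 0 else 0)
decreasing_by simp only [node.sizeOf_spec]; have := List.sizeOf_lt_of_mem c.2; omega


/-- A rooted tree is binary if every vertex has at most two children. -/
def IsBinary : RTree → Prop
  | node cs => cs.length ≤ 2 ∧ ∀ c ∈ cs, IsBinary c
decreasing_by simp only [node.sizeOf_spec]; have := List.sizeOf_lt_of_mem ‹c ∈ cs›; omega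

end RTree

/-!
The integer form `|V| ≤ h * (f + 1)` of the bound goes through by induction. If the root has child
subtrees `Tᵢ` and `H` is their maximal height, the induction hypothesis gives
`|Tᵢ| ≤ h(Tᵢ) * (f(Tᵢ) + 1) ≤ H * f(Tᵢ) + h(Tᵢ)`. The values `f(Tᵢ)` sum to at most `f(T)`, and, as
there are at most two children, their heights sum to at most `H` plus the smaller height, hence to
at most `H + f(T)`. Thus `|V| ≤ 1 + H * f(T) + (H + f(T)) = (H + 1) * (f(T) + 1)`.
-/

namespace RTree

/-- The sum `g₂ + g₄ + g₆ + …` of a list `[g₁, g₂, g₃, …]`, which is the pairing term in the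
recursion for `f`. List indices start at `0`, so these are the entries at odd indices. -/
def oddIndexSum (l : List ℕ) : ℕ :=
  ∑ i ∈ Finset.range l.length, if i % 2 = 1 then l.getD i 0 else 0

theorem sum_le_foldr_max_add_oddIndexSum :
    ∀ {l : List ℕ}, l.length ≤ 2 → l.sum ≤ l.foldr max 0 + oddIndexSum l
  | [], _ => by simp
  | [a], _ => by simp
  | [a, b], _ => by simp [oddIndexSum, Finset.sum_range_succ]

/-- The heights of the trees in a list in non-increasing order, as in the recursion for `f`. -/
def sortedHeights (cs : List RTree) : List ℕ :=
  ((cs.map h : Multiset ℕ).sort (· ≤ ·)).reverse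

theorem sortedHeights_perm (cs : List RTree) : (sortedHeights cs).Perm (cs.map h) :=
  (List.reverse_perm _).trans (Multiset.coe_eq_coe.mp (Multiset.sort_eq _ _))

theorem h_node (cs : List RTree) : (node cs).h = 1 + (cs.map h).foldr max 0 := by
  rw [h, List.attach_map_val]

theorem size_node (cs : List RTree) : (node cs).size = 1 + (cs.map size).sum := by
  rw [size, List.attach_map_val]

theorem f_node (cs : List RTree) :
    (node cs).f = max (cs.map f).sum (oddIndexSum (sortedHeights cs)) := by
  cases cs with
  | nil => simp [f, oddIndexSum, sortedHeights]
  | cons c cs =>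
    rw [f, List.attach_map_val, List.attach_map_val]
    rfl

theorem isBinary_node {cs : List RTree} :
    (node cs).IsBinary ↔ cs.length ≤ 2 ∧ ∀ c ∈ cs, c.IsBinary := by
  rw [IsBinary]

theorem h_pos (t : RTree) : 0 < t.h := by
  cases t
  rw [h_node]
  omega

theorem h_le_foldr_max {c : RTree} {cs : List RTree} (hc : c ∈ cs) :
    c.h ≤ (cs.map h).foldr max 0 :=
  List.le_max_of_le' 0 (List.mem_map_of_mem hc) le_rfl

theorem sum_map_f_le (cs : List RTree) : (cs.map f).sum ≤ (node cs).f :=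
  f_node cs ▸ le_max_left _ _

theorem oddIndexSum_sortedHeights_le (cs : List RTree) :
    oddIndexSum (sortedHeights cs) ≤ (node cs).f :=
  f_node cs ▸ le_max_right _ _

theorem sum_map_h_le {cs : List RTree} (hcs : cs.length ≤ 2) :
    (cs.map h).sum ≤ (cs.map h).foldr max 0 + (node cs).f := by
  have hperm := sortedHeights_perm cs
  have hlen : (sortedHeights cs).length ≤ 2 := by simpa [hperm.length_eq] using hcs
  calc (cs.map h).sum
      = (sortedHeights cs).sum := hperm.sum_eq.symm
    _ ≤ (sortedHeights cs).foldr max 0 + oddIndexSum (sortedHeights cs) :=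
        sum_le_foldr_max_add_oddIndexSum hlen
    _ = (cs.map h).foldr max 0 + oddIndexSum (sortedHeights cs) := by rw [hperm.foldr_eq]
    _ ≤ (cs.map h).foldr max 0 + (node cs).f := by
        gcongr
        exact oddIndexSum_sortedHeights_le cs

theorem sum_map_size_le {cs : List RTree} {H : ℕ} (hH : ∀ c ∈ cs, c.h ≤ H)
    (hsize : ∀ c ∈ cs, c.size ≤ c.h * (c.f + 1)) :
    (cs.map size).sum ≤ H * (cs.map f).sum + (cs.map h).sum := by
  rw [← List.sum_map_mul_left, ← List.sum_map_add]
  refine List.sum_le_sum fun c hc => ?_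
  calc c.size ≤ c.h * c.f + c.h := hsize c hc
    _ ≤ H * c.f + c.h := by
        gcongr
        exact hH c hc

theorem size_node_le {cs : List RTree} (hcs : cs.length ≤ 2)
    (hsize : ∀ c ∈ cs, c.size ≤ c.h * (c.f + 1)) :
    (node cs).size ≤ (node cs).h * ((node cs).f + 1) := by
  rw [size_node, h_node]
  set H := (cs.map h).foldr max 0
  calc 1 + (cs.map size).sum
      ≤ 1 + (H * (cs.map f).sum + (cs.map h).sum) := by
        gcongr
        exact sum_map_size_le (fun _ => h_le_foldr_max) hsize
    _ ≤ 1 + (H * (node cs).f + (H + (node cs).f)) := by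
        gcongr
        · exact sum_map_f_le cs
        · exact sum_map_h_le hcs
    _ = (1 + H) * ((node cs).f + 1) := by ring

theorem IsBinary.size_le : ∀ {t : RTree}, t.IsBinary → t.size ≤ t.h * (t.f + 1)
  | node _, ht =>
    have ⟨hlen, hbin⟩ := isBinary_node.mp ht
    size_node_le hlen fun c hc => (hbin c hc).size_le
termination_by t => sizeOf t

end RTree

/-- For every binary rooted tree `T_r` on `|V|` vertices,
`f(T_r) ≥ |V| / h(T_r) - 1`. -/
theorem binary_f_ge_size_div_h (t : RTree) (ht : t.IsBinary) :
    (t.size : ℝ) / t.h - 1 ≤ (t.f : ℝ) := by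
  have hpos : (0 : ℝ) < t.h := by exact_mod_cast t.h_pos
  rw [sub_le_iff_le_add, div_le_iff₀' hpos]
  exact_mod_cast ht.size_le
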